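/- For every infinitary self-delimiting machine M, the measure of any Σ^0_3 subset of the domain of the associated prefix-free machine M^* is not a 3-random real number. In particular, the probability that the output of a universal infinitary self-delimiting machine is a stream with a tail of 1s is not 3-random. -/

import Mathlib

open scoped Classical
open MeasureTheory

namespace RandProb

/-- Cantor space: the space of infinite binary sequences. -/
abbrev Cantor := ℕ → Bool

/-! ### Oracle partial recursive functions, via codes -/

/-- Codes for partial recursive functions with access to an oracle `O : ℕ → ℕ`.
These codes play the role of (oracle) Turing machines. -/
inductive CodeO : Type
  | zero : CodeO
  | succ : CodeO
  | left : CodeO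
  | right : CodeO
  | oracle : CodeO
  | pair : CodeO → CodeO → CodeO
  | comp : CodeO → CodeO → CodeO
  | prec : CodeO → CodeO → CodeO
  | rfind' : CodeO → CodeO

/-- Evaluation of an oracle code with (total) oracle `O`. -/
def CodeO.eval (O : ℕ → ℕ) : CodeO → ℕ →. ℕ
  | .zero => pure 0
  | .succ => Nat.succ
  | .left => ↑fun n : ℕ => n.unpair.1
  | .right => ↑fun n : ℕ => n.unpair.2
  | .oracle => ↑fun n : ℕ => O n
  | .pair cf cg => fun n => Nat.pair <$> cf.eval O n <*> cg.eval O n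
  | .comp cf cg => fun n => cg.eval O n >>= cf.eval O
  | .prec cf cg =>
    Nat.unpaired fun a n =>
      n.rec (cf.eval O a) fun y IH => do
        let i ← IH
        cg.eval O (Nat.pair a (Nat.pair y i))
  | .rfind' cf =>
    Nat.unpaired fun a m =>
      (Nat.rfind fun n => (fun m => m = 0) <$> cf.eval O (Nat.pair a (n + m))).map (· + m)

/-- A canonical injective numbering of oracle codes. -/
def CodeO.encode : CodeO → ℕ
  | .zero => 0
  | .succ => 1
  | .left => 2
  | .right => 3
  | .oracle => 4
  | .pair cf cg => 2 * (2 * Nat.pair cf.encode cg.encode) + 5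
  | .comp cf cg => 2 * (2 * Nat.pair cf.encode cg.encode + 1) + 5
  | .prec cf cg => 2 * (2 * Nat.pair cf.encode cg.encode) + 6
  | .rfind' cf => 2 * (2 * cf.encode + 1) + 6

/-- The Turing jump of an oracle: the halting problem relative to `O`,
as a `{0,1}`-valued function. -/
noncomputable def jump (O : ℕ → ℕ) : ℕ → ℕ := fun e =>
  if ∃ c : CodeO, c.encode = e ∧ (c.eval O e).Dom then 1 else 0

/-- `iterJump n` is `∅^(n)`, the `n`-th iterate of the halting problem (as an oracle). -/
noncomputable def iterJump : ℕ → ℕ → ℕ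
  | 0 => fun _ => 0
  | n + 1 => jump (iterJump n)

/-- `S ⊆ ℕ` is computably enumerable relative to the oracle `O`. -/
def CeIn (O : ℕ → ℕ) (S : Set ℕ) : Prop := ∃ c : CodeO, S = {m | (c.eval O m).Dom}

/-- The left Dedekind cut of `α` (as a set of codes of rationals) is c.e. in `O`. -/
def LeftCeIn (O : ℕ → ℕ) (α : ℝ) : Prop :=
  CeIn O {m | ∃ q : ℚ, Encodable.encode q = m ∧ (q : ℝ) < α}

/-- The right Dedekind cut of `α` (as a set of codes of rationals) is c.e. in `O`. -/
def RightCeIn (O : ℕ → ℕ) (α : ℝ) : Prop :=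
  CeIn O {m | ∃ q : ℚ, Encodable.encode q = m ∧ α < (q : ℝ)}

/-! ### Martin-Löf randomness for real numbers -/

/-- The `i`-th component of a Martin-Löf test coded by the set `W ⊆ ℕ`:
the union of all open rational intervals whose codes are enumerated into the
`i`-th section of `W`. -/
def testSet (W : Set ℕ) (i : ℕ) : Set ℝ :=
  {x | ∃ p q : ℚ, Nat.pair i (Encodable.encode (p, q)) ∈ W ∧ (p : ℝ) < x ∧ x < (q : ℝ)}

/-- `α` is Martin-Löf random relative to the oracle `O`. -/
def MLRandomIn (O : ℕ → ℕ) (α : ℝ) : Prop :=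
  ∀ W : Set ℕ, CeIn O W →
    (∀ i, volume (testSet W i) ≤ ENNReal.ofReal ((2 : ℝ)⁻¹ ^ i)) →
    ∃ i, α ∉ testSet W i

/-- `α` is `n`-random: Martin-Löf random relative to `∅^(n-1)`. -/
def NRandom (n : ℕ) (α : ℝ) : Prop := MLRandomIn (iterJump (n - 1)) α

/-! ### The uniform measure on Cantor space -/

/-- The binary digits of a real number (meaningful on `[0,1)`). -/
noncomputable def digits (x : ℝ) : Cantor := fun n => decide (⌊x * 2 ^ (n + 1)⌋ % 2 = 1)

/-- The uniform (Lebesgue) product measure on Cantor space, obtained as the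
pushforward of Lebesgue measure on `[0,1)` under the binary-digit map. -/
noncomputable def mu : Measure Cantor :=
  Measure.map digits (volume.restrict (Set.Ico (0 : ℝ) 1))

/-- The uniform measure of a set of elements of Cantor space, as a real number. -/
noncomputable def muR (S : Set Cantor) : ℝ := (mu S).toReal

/-! ### Strings, prefixes and cylinders -/

/-- The length-`n` initial segment of `X ∈ 2^ω`, as a finite binary string. -/
def initSeg (X : Cantor) (n : ℕ) : List Bool := (List.range n).map X

/-- `⟦S⟧`: the elements of Cantor space having a prefix in the set of strings `S`. -/
def cyl (S : Set (List Bool)) : Set Cantor := {X | ∃ n, initSeg X n ∈ S}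

/-- A set of strings is prefix-free if none of its elements properly extends another. -/
def IsPrefixFree (S : Set (List Bool)) : Prop := ∀ σ ∈ S, ∀ τ ∈ S, σ <+: τ → σ = τ

/-- A set of strings is upward closed if it is closed under taking extensions. -/
def UpClosed (S : Set (List Bool)) : Prop := ∀ σ ∈ S, ∀ τ, σ <+: τ → τ ∈ S

/-- Two strings are compatible if one is a prefix of the other. -/
def Compatible (σ τ : List Bool) : Prop := σ <+: τ ∨ τ <+: σ

/-! ### Oracle machines -/

/-- An element of Cantor space viewed as a `{0,1}`-valued oracle. -/
def oX (X : Cantor) : ℕ → ℕ := fun n => cond (X n) 1 0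

/-- `evalO X c n`: the (possibly divergent) output of the oracle machine `c`
on input `n` with oracle `X`. -/
def evalO (X : Cantor) (c : CodeO) (n : ℕ) : Part ℕ := c.eval (oX X) n

/-- The oracle obtained by writing the string `ρ` before the bits of `X`. -/
def prepend (ρ : List Bool) (X : Cantor) : Cantor := fun n =>
  if n < ρ.length then ρ.getD n false else X (n - ρ.length)

/-- `X ∈ 2^ω` extends the finite string `ρ`. -/
def Extends (X : Cantor) (ρ : List Bool) : Prop := initSeg X ρ.length = ρ

/-- `u` is a universal oracle machine: some effective, prefix-free translation
`c ↦ σ_c` satisfies `u(σ_c * X, n) ≃ c(X, n)` for all machines `c`. -/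
def UniversalOM (u : CodeO) : Prop :=
  ∃ σ : CodeO → List Bool,
    (∃ f : ℕ → ℕ, Computable f ∧ ∀ c : CodeO, f c.encode = Encodable.encode (σ c)) ∧
    IsPrefixFree (Set.range σ) ∧
    ∀ (c : CodeO) (X : Cantor) (n : ℕ), evalO (prepend (σ c) X) u n = evalO X c n

/-- `TOT(c)`: the oracles `X` such that the function `c(X)` is total. -/
def TOT (c : CodeO) : Set Cantor := {X | ∀ n, (evalO X c n).Dom}

/-- The domain of the partial function `c(X)`. -/
def domSet (c : CodeO) (X : Cantor) : Set ℕ := {n | (evalO X c n).Dom}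

/-- The range of the partial function `c(X)`. -/
def ranSet (c : CodeO) (X : Cantor) : Set ℕ := {v | ∃ n, v ∈ evalO X c n}

/-- `INF(c)`: the oracles `X` such that `c(X)` has infinite domain. -/
def INF (c : CodeO) : Set Cantor := {X | (domSet c X).Infinite}

/-- `COF(c)`: the oracles `X` such that `c(X)` has cofinite domain. -/
def COF (c : CodeO) : Set Cantor := {X | (domSet c X)ᶜ.Finite}

/-- `COM(c)`: the oracles `X` such that `c(X)` has computable domain. -/
def COM (c : CodeO) : Set Cantor := {X | ComputablePred fun n => n ∈ domSet c X}

/-- The characteristic function of a set of naturals. -/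
noncomputable def chi (A : Set ℕ) : ℕ → ℕ := fun n => if n ∈ A then 1 else 0

/-- Turing reducibility between sets of naturals. -/
def TuringLEs (B A : Set ℕ) : Prop := ∃ c : CodeO, ∀ n, c.eval (chi A) n = Part.some (chi B n)

/-- The halting problem `∅'` as a set of naturals. -/
noncomputable def HaltingSet : Set ℕ := {e | iterJump 1 e = 1}

/-- `COMPL(c)`: the oracles `X` such that the domain of `c(X)` computes the halting problem. -/
noncomputable def COMPL (c : CodeO) : Set Cantor := {X | TuringLEs HaltingSet (domSet c X)}

/-- Turing reducibility between total functions on ℕ. -/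
def TuringLEf (f g : ℕ → ℕ) : Prop := ∃ c : CodeO, ∀ n, c.eval g n = Part.some (f n)

/-- A real number viewed as an oracle, via its binary expansion. -/
noncomputable def realOracle (α : ℝ) : ℕ → ℕ := oX (digits α)

/-- Two reals have Turing-incomparable degrees. -/
noncomputable def TIncompReal (α β : ℝ) : Prop :=
  ¬ TuringLEf (realOracle α) (realOracle β) ∧ ¬ TuringLEf (realOracle β) (realOracle α)

/-! ### Arithmetical hierarchy -/

/-- Evaluation with the trivial (empty) oracle: ordinary partial recursion. -/
def eval0 (c : CodeO) : ℕ →. ℕ := c.eval fun _ => 0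

/-- `SigmaNumIdx n c` is the `Σ^0_{n+1}` subset of `ℕ` with index `c`. -/
def SigmaNumIdx : ℕ → CodeO → Set ℕ
  | 0, c => {m | (eval0 c m).Dom}
  | n + 1, c => {m | ∃ k, Nat.pair m k ∉ SigmaNumIdx n c}

/-- `S ⊆ ℕ` is `Σ^0_n` (intended for `n ≥ 1`). -/
def SigmaN (n : ℕ) (S : Set ℕ) : Prop := ∃ c : CodeO, S = SigmaNumIdx (n - 1) c

/-- The set of codes of the elements of a set of binary strings. -/
def strCodes (S : Set (List Bool)) : Set ℕ := {m | ∃ σ ∈ S, Encodable.encode σ = m}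

/-- A set of binary strings is `Σ^0_n`. -/
def SigmaStr (n : ℕ) (S : Set (List Bool)) : Prop := SigmaN n (strCodes S)

/-- A set of binary strings is `Π^0_n`: its complement is `Σ^0_n`. -/
def PiStr (n : ℕ) (S : Set (List Bool)) : Prop := SigmaStr n Sᶜ

/-- A set of binary strings is c.e. relative to the oracle `O`. -/
def CeStrIn (O : ℕ → ℕ) (S : Set (List Bool)) : Prop := CeIn O (strCodes S)

/-- `SigmaClassIdx n c m` is the `Σ^0_{n+1}` class of elements of Cantor space
with index `c` and parameter `m`. -/
def SigmaClassIdx : ℕ → CodeO → ℕ → Set Cantor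
  | 0, c, m => {X | (evalO X c m).Dom}
  | n + 1, c, m => {X | ∃ k, X ∉ SigmaClassIdx n c (Nat.pair m k)}

/-! ### Monotone machines -/

/-- A monotone machine: a partial computable, monotone map on finite binary strings. -/
structure MonoMachine where
  f : List Bool →. List Bool
  partrec : Partrec f
  mono : ∀ ⦃σ τ a b : List Bool⦄, σ <+: τ → a ∈ f σ → b ∈ f τ → a <+: b

/-- The oracles `X` such that the output of the monotone machine on `X` is infinite. -/
def MonoINF (M : MonoMachine) : Set Cantor :=
  {X | ∀ k, ∃ n a, a ∈ M.f (initSeg X n) ∧ k ≤ a.length}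

/-- The `k`-th bit of the output `M(X)` of a monotone machine is `b`. -/
def MonoMachine.hasBit (M : MonoMachine) (X : Cantor) (k : ℕ) (b : Bool) : Prop :=
  ∃ n a, a ∈ M.f (initSeg X n) ∧ a[k]? = some b

/-- `U` is a universal monotone machine. -/
def UniversalMono (U : MonoMachine) : Prop :=
  ∃ (M : ℕ → MonoMachine) (σ : ℕ → List Bool),
    Partrec₂ (fun (e : ℕ) (τ : List Bool) => (M e).f τ) ∧
    (∀ V : MonoMachine, ∃ e, (M e).f = V.f) ∧
    Computable σ ∧ IsPrefixFree (Set.range σ) ∧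
    ∀ e τ, U.f (σ e ++ τ) = (M e).f τ

/-! ### Infinitary self-delimiting machines -/

/-- Chaitin's infinitary self-delimiting machines: `f σ n` is the `n`-th approximation
of the output on program `σ` (`none` meaning divergence); the convergence relation is
decidable, approximations are monotone, and machines are self-delimiting. -/
structure InfMachine where
  f : List Bool → ℕ → Option (List Bool)
  computable : Computable₂ f
  mono : ∀ σ m n a, n < m → f σ m = some a → ∃ b, f σ n = some b ∧ b <+: a
  sd : ∀ σ τ n a, f σ n = some a → f (σ ++ τ) n = some a

/-- `M^∞(σ)↓`: all approximations converge. -/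
def InfMachine.domInf (M : InfMachine) (σ : List Bool) : Prop := ∀ n, M.f σ n ≠ none

/-- The domain of `M^∞`. -/
def InfMachine.DOM (M : InfMachine) : Set (List Bool) := {σ | M.domInf σ}

/-- The output `M^∞(σ)` is infinite (a stream). -/
def InfMachine.outInf (M : InfMachine) (σ : List Bool) : Prop :=
  ∀ k, ∃ n a, M.f σ n = some a ∧ k ≤ a.length

/-- `FIN(M^∞)`: programs in the domain with finite output. -/
def InfMachine.FIN (M : InfMachine) : Set (List Bool) := {σ | M.domInf σ ∧ ¬ M.outInf σ}

/-- `INF(M^∞)`: programs in the domain with infinite output. -/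
def InfMachine.INF (M : InfMachine) : Set (List Bool) := {σ | M.domInf σ ∧ M.outInf σ}

/-- The `k`-th bit of the output `M^∞(σ)` is `b`. -/
def InfMachine.hasBit (M : InfMachine) (σ : List Bool) (k : ℕ) (b : Bool) : Prop :=
  ∃ n a, M.f σ n = some a ∧ a[k]? = some b

/-- The domain of the prefix-free machine `M^*`: minimal strings in the domain of `M^∞`. -/
def InfMachine.DOMstar (M : InfMachine) : Set (List Bool) :=
  {σ | M.domInf σ ∧ ∀ τ, τ <+: σ → τ ≠ σ → ¬ M.domInf τ}

/-- Programs whose output is a stream with a tail of 1s. -/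
def InfMachine.COFout (M : InfMachine) : Set (List Bool) :=
  {σ | M.domInf σ ∧ M.outInf σ ∧ ∃ t, ∀ k, t ≤ k → M.hasBit σ k true}

/-- `A^∞(σ) ≃ B^∞(τ)`: both converge or both diverge, with equal outputs. -/
def InfAgree (A : InfMachine) (σ : List Bool) (B : InfMachine) (τ : List Bool) : Prop :=
  (A.domInf σ ↔ B.domInf τ) ∧ (A.domInf σ → ∀ k b, (A.hasBit σ k b ↔ B.hasBit τ k b))

/-- `U` is a universal infinitary self-delimiting machine. -/
def UniversalInf (U : InfMachine) : Prop :=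
  ∃ (M : ℕ → InfMachine) (σ : ℕ → List Bool),
    Computable (fun p : ℕ × List Bool × ℕ => (M p.1).f p.2.1 p.2.2) ∧
    (∀ V : InfMachine, ∃ e, ∀ τ, InfAgree (M e) τ V τ) ∧
    Computable σ ∧ IsPrefixFree (Set.range σ) ∧
    ∀ e τ, InfAgree U (σ e ++ τ) (M e) τ

end RandProb

namespace RandProb

theorem exists_codeO {f : ℕ →. ℕ} (hf : Nat.Partrec f) :
    ∃ c : CodeO, ∀ O, c.eval O = f := by
  obtain ⟨c, rfl⟩ := Nat.Partrec.Code.exists_code.1 hf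
  induction c with
  | zero => exact ⟨.zero, fun O => rfl⟩
  | succ => exact ⟨.succ, fun O => rfl⟩
  | left => exact ⟨.left, fun O => rfl⟩
  | right => exact ⟨.right, fun O => rfl⟩
  | pair a b iha ihb =>
    obtain ⟨ca, ha⟩ := iha (Nat.Partrec.Code.exists_code.2 ⟨a, rfl⟩)
    obtain ⟨cb, hb⟩ := ihb (Nat.Partrec.Code.exists_code.2 ⟨b, rfl⟩)
    exact ⟨.pair ca cb, fun O => by simp only [CodeO.eval, Nat.Partrec.Code.eval, ha, hb]; rfl⟩
  | comp a b iha ihb =>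
    obtain ⟨ca, ha⟩ := iha (Nat.Partrec.Code.exists_code.2 ⟨a, rfl⟩)
    obtain ⟨cb, hb⟩ := ihb (Nat.Partrec.Code.exists_code.2 ⟨b, rfl⟩)
    exact ⟨.comp ca cb, fun O => by simp only [CodeO.eval, Nat.Partrec.Code.eval, ha, hb]; rfl⟩
  | prec a b iha ihb =>
    obtain ⟨ca, ha⟩ := iha (Nat.Partrec.Code.exists_code.2 ⟨a, rfl⟩)
    obtain ⟨cb, hb⟩ := ihb (Nat.Partrec.Code.exists_code.2 ⟨b, rfl⟩)
    exact ⟨.prec ca cb, fun O => by simp only [CodeO.eval, Nat.Partrec.Code.eval, ha, hb]; rfl⟩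
  | rfind' a iha =>
    obtain ⟨ca, ha⟩ := iha (Nat.Partrec.Code.exists_code.2 ⟨a, rfl⟩)
    refine ⟨.rfind' ca, fun O => ?_⟩
    simp only [CodeO.eval, Nat.Partrec.Code.eval, ha]; congr!

theorem partrec_eval0 (c : CodeO) : Nat.Partrec (eval0 c) := by
  unfold eval0
  induction c with
  | zero => exact .zero
  | succ => exact .succ
  | left => exact .left
  | right => exact .right
  | oracle => exact .zero
  | pair a b iha ihb => exact .pair iha ihb
  | comp a b iha ihb => exact .comp iha ihb
  | prec a b iha ihb => exact .prec iha ihb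
  | rfind' a iha =>
    have := Nat.Partrec.rfind' iha
    exact this

theorem encode_inj : ∀ {c d : CodeO}, c.encode = d.encode → c = d := by
  intro c
  induction c with
  | zero => intro d; cases d <;> simp [CodeO.encode]
  | succ => intro d; cases d <;> simp [CodeO.encode]
  | left => intro d; cases d <;> simp [CodeO.encode]
  | right => intro d; cases d <;> simp [CodeO.encode]
  | oracle => intro d; cases d <;> simp [CodeO.encode]
  | pair a b iha ihb =>
    intro d h
    cases d <;> simp only [CodeO.encode] at h <;> try omega
    rename_i c d
    have h2 := (Nat.pair_eq_pair.1 (by omega : Nat.pair a.encode b.encode = Nat.pair c.encode d.encode))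
    rw [iha h2.1, ihb h2.2]
  | comp a b iha ihb =>
    intro d h
    cases d <;> simp only [CodeO.encode] at h <;> try omega
    rename_i c d
    have h2 := (Nat.pair_eq_pair.1 (by omega : Nat.pair a.encode b.encode = Nat.pair c.encode d.encode))
    rw [iha h2.1, ihb h2.2]
  | prec a b iha ihb =>
    intro d h
    cases d <;> simp only [CodeO.encode] at h <;> try omega
    rename_i c d
    have h2 := (Nat.pair_eq_pair.1 (by omega : Nat.pair a.encode b.encode = Nat.pair c.encode d.encode))
    rw [iha h2.1, ihb h2.2]
  | rfind' a iha =>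
    intro d h
    cases d <;> simp only [CodeO.encode] at h <;> try omega
    rename_i c
    rw [iha (by omega : a.encode = c.encode)]

theorem eval_comp_some {O : ℕ → ℕ} {c d : CodeO} {n x : ℕ} (h : d.eval O n = Part.some x) :
    (CodeO.comp c d).eval O n = c.eval O x := by
  change (d.eval O n).bind (c.eval O) = _
  rw [h]; exact Part.bind_some x (c.eval O)

/-- constant codes -/
def constO : ℕ → CodeO
  | 0 => .zero
  | n + 1 => .comp .succ (constO n)

theorem eval_constO (O : ℕ → ℕ) (n m : ℕ) : (constO n).eval O m = Part.some n := by
  induction n with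
  | zero => rfl
  | succ n ih => rw [constO, eval_comp_some ih]; rfl

theorem primrec_constO : Primrec (fun n => (constO n).encode) := by
  have : Primrec (fun n : ℕ => Nat.rec (motive := fun _ => ℕ) 0
      (fun _ e => 2 * (2 * Nat.pair 1 e + 1) + 5) n) := by
    refine Primrec.nat_rec₁ 0 ?_
    refine Primrec.nat_add.comp (Primrec.nat_mul.comp (Primrec.const 2)
      (Primrec.nat_add.comp (Primrec.nat_mul.comp (Primrec.const 2)
        (Primrec₂.natPair.comp (Primrec.const 1) Primrec.snd)) (Primrec.const 1))) (Primrec.const 5)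
  refine this.of_eq fun n => ?_
  induction n with
  | zero => rfl
  | succ n ih => simp only [constO, CodeO.encode, ← ih]

/-- the code `d` decides `p` with oracle `O` -/
def DecBy {α : Type} [Primcodable α] (O : ℕ → ℕ) (p : α → Prop) : Prop :=
  ∃ c : CodeO, ∀ a, c.eval O (Encodable.encode a) = Part.some (if p a then 1 else 0)

theorem decBy_of_computable {α : Type} [Primcodable α] (O : ℕ → ℕ) {p : α → Prop}
    (hp : ComputablePred p) : DecBy O p := by
  have h := hp.decide
  obtain ⟨c, hc⟩ := exists_codeO h
  refine ⟨c, fun a => ?_⟩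
  rw [hc]
  by_cases h : p a <;> simp [h]

theorem ce_of_decBy {α : Type} [Primcodable α] {O : ℕ → ℕ} {q : α × ℕ → Prop}
    (hq : DecBy O q) : ∃ c : CodeO, ∀ a : α,
      (c.eval O (Encodable.encode a)).Dom ↔ ∃ k, ¬ q (a, k) := by
  obtain ⟨c, hc⟩ := hq
  obtain ⟨d, hd⟩ := exists_codeO (f := fun n => Part.some (Nat.pair n 0))
    (Partrec.nat_iff.1 (Primrec₂.natPair.comp Primrec.id (Primrec.const 0)).to_comp)
  refine ⟨.comp (.rfind' c) d, fun a => ?_⟩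
  have hc' : ∀ k, c.eval O (Nat.pair (Encodable.encode a) k)
      = Part.some (if q (a, k) then 1 else 0) := fun k => by
    have := hc (a, k); simpa using this
  rw [eval_comp_some (x := Nat.pair (Encodable.encode a) 0) (by rw [hd])]
  have key : (CodeO.rfind' c).eval O (Nat.pair (Encodable.encode a) 0) =
      (Nat.rfind (fun n => Part.some (decide (¬ q (a, n))))).map (· + 0) := by
    simp only [CodeO.eval, Nat.unpaired, Nat.unpair_pair]
    congr 2
    funext n
    rw [Nat.add_zero, hc']
    by_cases h : q (a, n) <;> simp [h]
  rw [key]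
  refine (Nat.rfind_dom (p := fun n => Part.some (decide (¬ q (a, n))))).trans ?_
  constructor
  · rintro ⟨n, hn, -⟩
    exact ⟨n, by simpa using hn⟩
  · rintro ⟨n, hn⟩
    exact ⟨n, by simp [hn], fun _ => trivial⟩

theorem decBy_jump {α : Type} [Primcodable α] {O : ℕ → ℕ} {p : α → Prop} {c : CodeO}
    (hc : ∀ a : α, (c.eval O (Encodable.encode a)).Dom ↔ p a) : DecBy (jump O) p := by
  have hg : Primrec (fun m => (CodeO.comp c (constO m)).encode) := by
    simp only [CodeO.encode]
    refine Primrec.nat_add.comp (Primrec.nat_mul.comp (Primrec.const 2)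
      (Primrec.nat_add.comp (Primrec.nat_mul.comp (Primrec.const 2)
        (Primrec₂.natPair.comp (Primrec.const _) primrec_constO)) (Primrec.const 1)))
        (Primrec.const 5)
  obtain ⟨d, hd⟩ := exists_codeO (Partrec.nat_iff.1 hg.to_comp)
  refine ⟨.comp .oracle d, fun a => ?_⟩
  rw [eval_comp_some (x := (CodeO.comp c (constO (Encodable.encode a))).encode) (by rw [hd]; rfl)]
  change Part.some (jump O _) = _
  congr 1
  have : ∀ e, (∃ c' : CodeO, c'.encode = (CodeO.comp c (constO (Encodable.encode a))).encode ∧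
      (c'.eval O e).Dom) ↔ p a := by
    intro e
    rw [← hc]
    constructor
    · rintro ⟨c', h, h'⟩
      rw [encode_inj h] at h'
      rwa [eval_comp_some (eval_constO _ _ _)] at h'
    · intro h
      refine ⟨_, rfl, ?_⟩
      rwa [eval_comp_some (eval_constO _ _ _)]
  simp only [jump, this]

/-- `Σ_n` predicates -/
def Sg : ℕ → ∀ {α : Type} [Primcodable α], (α → Prop) → Prop
  | 0, _, _, p => ComputablePred p
  | n + 1, α, _, p => ∃ q : α × ℕ → Prop, Sg n q ∧ ∀ a, p a ↔ ∃ k, ¬ q (a, k)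

theorem Sg.decBy {n : ℕ} : ∀ {α : Type} [Primcodable α] {p : α → Prop}, Sg n p →
    DecBy (iterJump n) p := by
  induction n with
  | zero => intro α _ p hp; exact decBy_of_computable _ hp
  | succ n ih =>
    intro α _ p hp
    obtain ⟨q, hq, hpq⟩ := hp
    obtain ⟨c, hc⟩ := ce_of_decBy (ih hq)
    exact decBy_jump (c := c) fun a => by rw [hc, hpq]

theorem Sg.ceIn {n : ℕ} {p : ℕ → Prop} (hp : Sg (n + 1) p) : CeIn (iterJump n) {m | p m} := by
  obtain ⟨q, hq, hpq⟩ := hp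
  obtain ⟨c, hc⟩ := ce_of_decBy hq.decBy
  refine ⟨c, ?_⟩
  ext m
  have := hc m
  simp only [Encodable.encode_nat] at this
  simp only [Set.mem_ofPred_eq, this, hpq]

section closure
variable {α β : Type} [Primcodable α] [Primcodable β]

theorem Sg.congr {n : ℕ} {p q : α → Prop} (hp : Sg n p) (h : ∀ a, q a ↔ p a) : Sg n q := by
  have : q = p := funext fun a => propext (h a)
  rwa [this]

theorem Sg.comp {n : ℕ} : ∀ {α β : Type} [Primcodable α] [Primcodable β] {p : α → Prop},
    Sg n p → ∀ {f : β → α}, Computable f → Sg n (fun b => p (f b)) := by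
  induction n with
  | zero =>
    intro α β _ _ p hp f hf
    exact Computable.computablePred (hp.decide.comp hf)
  | succ n ih =>
    intro α β _ _ p hp f hf
    obtain ⟨q, hq, hpq⟩ := hp
    exact ⟨fun x => q (f x.1, x.2), ih hq ((hf.comp .fst).pair .snd), fun b => hpq _⟩

theorem Sg.of_comp {n : ℕ} : ∀ {α : Type} [Primcodable α] {p : α → Prop},
    ComputablePred p → Sg n p := by
  induction n with
  | zero => intro α _ p hp; exact hp
  | succ n ih =>
    intro α _ p hp
    refine ⟨fun x => ¬ p x.1, ih ?_, fun a => by simp⟩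
    exact Sg.comp (n := 0) (p := fun a => ¬ p a) hp.not Computable.fst

theorem Sg.of_prim {n : ℕ} {p : α → Prop} (hp : PrimrecPred p) : Sg n p :=
  Sg.of_comp hp.computablePred

theorem Sg.neg {n : ℕ} {p : α → Prop} (hp : Sg n p) : Sg (n + 1) (fun a => ¬ p a) :=
  ⟨fun x => p x.1, hp.comp .fst, fun a => by simp⟩

theorem Sg.ex {n : ℕ} {p : α × ℕ → Prop} (hp : Sg (n + 1) p) :
    Sg (n + 1) (fun a => ∃ k, p (a, k)) := by
  obtain ⟨q, hq, hpq⟩ := hp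
  refine ⟨fun x => q ((x.1, x.2.unpair.1), x.2.unpair.2), hq.comp ?_, fun a => ?_⟩
  · have hu : Computable (fun x : α × ℕ => x.2.unpair) := Primrec.unpair.to_comp.comp .snd
    exact (Computable.pair .fst (Computable.fst.comp hu)).pair (Computable.snd.comp hu)
  · constructor
    · rintro ⟨k, hk⟩
      obtain ⟨j, hj⟩ := (hpq _).1 hk
      exact ⟨Nat.pair k j, by simpa using hj⟩
    · rintro ⟨k, hk⟩
      exact ⟨_, (hpq _).2 ⟨_, hk⟩⟩

theorem Sg.and_or {n : ℕ} : ∀ {α : Type} [Primcodable α] {p q : α → Prop},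
    Sg n p → Sg n q → Sg n (fun a => p a ∧ q a) ∧ Sg n (fun a => p a ∨ q a) := by
  induction n with
  | zero =>
    intro α _ p q hp hq
    have h1 := hp.decide
    have h2 := hq.decide
    constructor
    · refine Computable.computablePred (((Primrec.and.to_comp).comp h1 h2).of_eq fun a => ?_)
      simp
    · refine Computable.computablePred (((Primrec.or.to_comp).comp h1 h2).of_eq fun a => ?_)
      simp
  | succ n ih =>
    intro α _ p q hp hq
    obtain ⟨p', hp', hpp⟩ := hp
    obtain ⟨q', hq', hqq⟩ := hq
    have hu : Computable (fun x : α × ℕ => x.2.unpair) := Primrec.unpair.to_comp.comp .snd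
    constructor
    · refine ⟨fun x => p' (x.1, x.2.unpair.1) ∨ q' (x.1, x.2.unpair.2), (ih
        (hp'.comp (Computable.pair .fst (Computable.fst.comp hu)))
        (hq'.comp (Computable.pair .fst (Computable.snd.comp hu)))).2, fun a => ?_⟩
      change (p a ∧ q a) ↔ _
      rw [hpp, hqq]
      constructor
      · rintro ⟨⟨k, hk⟩, j, hj⟩
        exact ⟨Nat.pair k j, by simp [hk, hj]⟩
      · rintro ⟨k, hk⟩
        push Not at hk
        exact ⟨⟨_, hk.1⟩, _, hk.2⟩
    · refine ⟨fun x => p' x ∧ q' x, (ih hp' hq').1, fun a => ?_⟩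
      change (p a ∨ q a) ↔ _
      rw [hpp, hqq, ← exists_or]
      simp only [not_and_or]

theorem Sg.and {n : ℕ} {p q : α → Prop} (hp : Sg n p) (hq : Sg n q) :
    Sg n (fun a => p a ∧ q a) := (Sg.and_or hp hq).1

theorem Sg.or {n : ℕ} {p q : α → Prop} (hp : Sg n p) (hq : Sg n q) :
    Sg n (fun a => p a ∨ q a) := (Sg.and_or hp hq).2

theorem Sg.up {n : ℕ} : ∀ {α : Type} [Primcodable α] {p : α → Prop}, Sg n p → Sg (n + 1) p := by
  induction n with
  | zero => intro α _ p hp; exact Sg.of_comp hp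
  | succ n ih =>
    intro α _ p hp
    obtain ⟨q, hq, h⟩ := hp
    exact ⟨q, ih hq, h⟩

theorem Sg.exT {n : ℕ} {p : α × β → Prop} (hp : Sg (n + 1) p) :
    Sg (n + 1) (fun a => ∃ b, p (a, b)) := by
  by_cases hβ : Nonempty β
  swap
  · refine Sg.congr (Sg.of_comp (p := fun _ => False) ?_) ?_
    · exact Computable.computablePred ((Computable.const false).of_eq fun a => by simp)
    · intro a
      simp only [iff_false]
      rintro ⟨b, -⟩
      exact hβ ⟨b⟩
  obtain ⟨b0⟩ := hβ
  have hp2 : Sg (n + 1) (fun x : α × ℕ => p (x.1, (Encodable.decode x.2 : Option β).getD b0)) := by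
    refine Sg.comp (p := p) hp (Computable.pair .fst ?_)
    exact Primrec.option_getD.to_comp.comp (Computable.decode.comp .snd) (Computable.const b0)
  refine hp2.ex.congr fun a => ?_
  constructor
  · rintro ⟨b, hb⟩
    exact ⟨Encodable.encode b, by simpa using hb⟩
  · rintro ⟨k, hk⟩
    exact ⟨_, hk⟩

theorem comp_bdd {α : Type} [Primcodable α] {p : α × ℕ → Prop} (hp : ComputablePred p) :
    ComputablePred (fun x : α × ℕ => ∀ m < x.2, p (x.1, m)) := by
  have h : Computable (fun x : α × ℕ => Nat.rec (motive := fun _ => Bool) true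
      (fun m b => b && decide (p (x.1, m))) x.2) := by
    refine Computable.nat_rec (h := fun (x : α × ℕ) (y : ℕ × Bool) => y.2 && decide (p (x.1, y.1)))
      Computable.snd (Computable.const true) ?_
    exact (Primrec.and.to_comp).comp (Computable.snd.comp .snd)
      (hp.decide.comp (Computable.pair (Computable.fst.comp .fst) (Computable.fst.comp .snd)))
  refine Computable.computablePred (h.of_eq fun ⟨a, t⟩ => ?_)
  induction t with
  | zero => simp
  | succ t ih =>
    simp only at ih ⊢
    rw [ih, ← Bool.decide_and]
    congr 1
    simp only [Nat.lt_succ_iff_lt_or_eq, or_imp, forall_and, forall_eq]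

theorem Sg.bdd {n : ℕ} : ∀ {α : Type} [Primcodable α] {p : α × ℕ → Prop}, Sg n p →
    Sg n (fun x : α × ℕ => ∀ m < x.2, p (x.1, m)) ∧
    Sg n (fun x : α × ℕ => ∃ m < x.2, p (x.1, m)) := by
  induction n with
  | zero =>
    intro α _ p hp
    refine ⟨comp_bdd hp, ?_⟩
    have := (comp_bdd hp.not).not
    refine this.of_eq fun a => ?_
    simp
  | succ n ih =>
    intro α _ p hp
    constructor
    · obtain ⟨q, hq, h⟩ := hp
      have h1 : Sg n (fun x : (α × List ℕ) × ℕ => q ((x.1.1, x.2), x.1.2.getD x.2 0)) := by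
        refine hq.comp (Computable.pair (Computable.pair (Computable.fst.comp .fst) .snd) ?_)
        exact (Primrec.list_getD 0).to_comp.comp (Computable.snd.comp .fst) .snd
      have h2 := (ih h1).2.neg
      have h3 : Sg (n + 1) (fun x : (α × ℕ) × List ℕ =>
          ¬ ∃ m < x.1.2, q ((x.1.1, m), x.2.getD m 0)) :=
        h2.comp (f := fun x : (α × ℕ) × List ℕ => ((x.1.1, x.2), x.1.2))
          (Computable.pair (Computable.pair (Computable.fst.comp .fst) .snd)
            (Computable.snd.comp .fst))
      refine h3.exT.congr fun x => ?_
      constructor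
      · intro hx
        have : ∀ m, ∃ k, m < x.2 → ¬ q ((x.1, m), k) := fun m => by
          by_cases hm : m < x.2
          · obtain ⟨k, hk⟩ := (h _).1 (hx m hm)
            exact ⟨k, fun _ => hk⟩
          · exact ⟨0, fun h => absurd h hm⟩
        choose g hg using this
        refine ⟨(List.range x.2).map g, ?_⟩
        rintro ⟨m, hm, hq'⟩
        refine hg m hm ?_
        have : ((List.range x.2).map g).getD m 0 = g m := by
          simp at hm ⊢
          simp [hm]
        rw [this] at hq'
        exact hq'
      · rintro ⟨l, hl⟩ m hm
        refine (h _).2 ⟨l.getD m 0, fun hq' => hl ⟨m, hm, hq'⟩⟩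
    · have h1 : Sg (n + 1) (fun x : (α × ℕ) × ℕ => x.2 < x.1.2 ∧ p (x.1.1, x.2)) :=
        (Sg.of_prim (Primrec.nat_lt.comp .snd (Primrec.snd.comp .fst))).and
          (hp.comp (Computable.pair (Computable.fst.comp .fst) .snd))
      exact h1.ex.congr fun x => by simp

theorem Sg.all_lt {n : ℕ} {p : α × ℕ → Prop} (hp : Sg n p) {t : α → ℕ} (ht : Computable t) :
    Sg n (fun x : α => ∀ m < t x, p (x, m)) :=
  (Sg.bdd hp).1.comp (f := fun x => (x, t x)) (Computable.id.pair ht)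

theorem Sg.ex_lt {n : ℕ} {p : α × ℕ → Prop} (hp : Sg n p) {t : α → ℕ} (ht : Computable t) :
    Sg n (fun x : α => ∃ m < t x, p (x, m)) :=
  (Sg.bdd hp).2.comp (f := fun x => (x, t x)) (Computable.id.pair ht)

end closure

theorem Sg.of_eval0 (c : CodeO) : Sg 1 (fun m : ℕ => (eval0 c m).Dom) := by
  obtain ⟨d, hd⟩ := Nat.Partrec.Code.exists_code.1 (partrec_eval0 c)
  rw [← hd]
  have h : ComputablePred (fun x : ℕ × ℕ => ¬ (Nat.Partrec.Code.evaln x.2 d x.1).isSome = true) := by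
    refine ComputablePred.not (Computable.computablePred ((Primrec.option_isSome.comp
      (Nat.Partrec.Code.primrec_evaln.comp
        (((Primrec.snd).pair (.const d)).pair .fst))).to_comp.of_eq fun a => by simp))
  refine ⟨_, h, fun m => ?_⟩
  simp only [not_not, Part.dom_iff_mem, Nat.Partrec.Code.evaln_complete, Option.isSome_iff_exists,
    Option.mem_def]
  exact exists_comm

theorem Sg.of_idx (n : ℕ) (c : CodeO) : Sg (n + 1) (fun m : ℕ => m ∈ SigmaNumIdx n c) := by
  induction n with
  | zero => exact Sg.of_eval0 c
  | succ n ih =>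
    refine ⟨fun x => Nat.pair x.1 x.2 ∈ SigmaNumIdx n c,
      ih.comp (Primrec₂.natPair.comp .fst .snd).to_comp, fun a => Iff.rfl⟩

end RandProb

namespace RandProb

theorem measurable_digits : Measurable digits := by
  refine measurable_pi_lambda _ fun n => ?_
  have h1 : Measurable (fun x : ℝ => ⌊x * 2 ^ (n + 1)⌋) :=
    Int.measurable_floor.comp (measurable_id.mul_const _)
  exact (measurable_of_countable (fun z : ℤ => decide (z % 2 = 1))).comp h1

/-- numeric value of a string -/
def strVal : List Bool → ℕ
  | [] => 0
  | b :: l => (if b then 2 ^ l.length else 0) + strVal l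

theorem strVal_append (l : List Bool) (b : Bool) :
    strVal (l ++ [b]) = 2 * strVal l + (if b then 1 else 0) := by
  induction l with
  | nil => simp [strVal]
  | cons a l ih =>
    simp only [List.cons_append, strVal, ih, List.length_append, List.length_singleton]
    split_ifs <;> ring

theorem strVal_lt (l : List Bool) : strVal l < 2 ^ l.length := by
  induction l with
  | nil => simp [strVal]
  | cons a l ih =>
    simp only [strVal, List.length_cons, pow_succ]
    split_ifs <;> omega

theorem initSeg_succ (X : Cantor) (n : ℕ) : initSeg X (n + 1) = initSeg X n ++ [X n] := by
  simp [initSeg, List.range_succ]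

theorem initSeg_length (X : Cantor) (n : ℕ) : (initSeg X n).length = n := by simp [initSeg]

theorem initSeg_prefix (X : Cantor) {n m : ℕ} (h : n ≤ m) : initSeg X n <+: initSeg X m := by
  induction m, h using Nat.le_induction with
  | base => exact List.prefix_rfl
  | succ m _ ih => rw [initSeg_succ]; exact ih.trans (List.prefix_append _ _)

theorem strVal_digits {x : ℝ} (h0 : 0 ≤ x) (h1 : x < 1) (n : ℕ) :
    (strVal (initSeg (digits x) n) : ℤ) = ⌊x * 2 ^ n⌋ := by
  induction n with
  | zero =>
    have : ⌊x⌋ = 0 := Int.floor_eq_zero_iff.2 ⟨h0, h1⟩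
    simp [initSeg, strVal, this]
  | succ n ih =>
    rw [initSeg_succ, strVal_append]
    push_cast
    rw [ih]
    have h2 : ⌊x * 2 ^ n⌋ = ⌊x * 2 ^ (n + 1)⌋ / 2 := by
      have h3 := Int.floor_le (x * 2 ^ n)
      have h4 := Int.lt_floor_add_one (x * 2 ^ n)
      have h5 : 2 * ⌊x * 2 ^ n⌋ ≤ ⌊x * 2 ^ (n + 1)⌋ := by
        rw [Int.le_floor, pow_succ]; push_cast; linarith
      have h6 : ⌊x * 2 ^ (n + 1)⌋ < 2 * ⌊x * 2 ^ n⌋ + 2 := by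
        rw [Int.floor_lt, pow_succ]; push_cast; linarith
      omega
    rw [h2]
    simp only [digits, decide_eq_true_eq]
    split_ifs <;> omega

theorem strVal_inj : ∀ {l l' : List Bool}, l.length = l'.length → strVal l = strVal l' → l = l' := by
  intro l
  induction l with
  | nil => intro l' h _; exact (List.length_eq_zero_iff.1 h.symm).symm
  | cons a l ih =>
    intro l' h h'
    cases l' with
    | nil => simp at h
    | cons b l' =>
      simp only [List.length_cons, add_left_inj] at h
      simp only [strVal, h] at h'
      have h3 := strVal_lt l
      have h4 := strVal_lt l'
      rw [h] at h3
      have : a = b := by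
        cases a <;> cases b <;> simp at h' ⊢ <;> omega
      subst this
      rw [ih h (by omega)]

theorem measurable_initSeg (n : ℕ) : ∀ S : Set (List Bool),
    MeasurableSet {X : Cantor | initSeg X n ∈ S} := by
  induction n with
  | zero => intro S; simp only [initSeg, List.range_zero, List.map_nil]; exact MeasurableSet.const _
  | succ n ih =>
    intro S
    have h : ∀ b : Bool, MeasurableSet ({X : Cantor | X n = b} ∩
        {X : Cantor | initSeg X n ∈ {l | l ++ [b] ∈ S}}) := fun b =>
      (measurableSet_eq_fun (measurable_pi_apply n) measurable_const).inter (ih _)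
    have : {X : Cantor | initSeg X (n + 1) ∈ S} = ⋃ b : Bool, ({X : Cantor | X n = b} ∩
        {X : Cantor | initSeg X n ∈ {l | l ++ [b] ∈ S}}) := by
      ext X
      simp [initSeg_succ]
    rw [this]
    exact MeasurableSet.iUnion h

theorem measurable_cyl (S : Set (List Bool)) : MeasurableSet (cyl S) := by
  have : cyl S = ⋃ n, {X : Cantor | initSeg X n ∈ S} := by
    ext X; simp [cyl]
  rw [this]
  exact MeasurableSet.iUnion fun n => measurable_initSeg n S

theorem mu_cyl_single (σ : List Bool) :
    mu (cyl {σ}) = ENNReal.ofReal ((2 : ℝ)⁻¹ ^ σ.length) := by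
  have hms := measurable_cyl {σ}
  rw [mu, Measure.map_apply measurable_digits hms, Measure.restrict_apply (measurable_digits hms)]
  have hp : (0 : ℝ) < 2 ^ σ.length := by positivity
  have : digits ⁻¹' cyl {σ} ∩ Set.Ico (0 : ℝ) 1 =
      Set.Ico ((strVal σ : ℝ) / 2 ^ σ.length) ((strVal σ + 1 : ℝ) / 2 ^ σ.length) := by
    have hlt : (strVal σ : ℝ) + 1 ≤ 2 ^ σ.length := by exact_mod_cast strVal_lt σ
    ext x
    simp only [Set.mem_inter_iff, Set.mem_preimage, Set.mem_Ico, div_le_iff₀ hp, lt_div_iff₀ hp]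
    constructor
    · rintro ⟨⟨n, hn⟩, h0, h1⟩
      have hn : initSeg (digits x) n = σ := hn
      have hl := congrArg List.length hn
      rw [initSeg_length] at hl
      have := strVal_digits h0 h1 n
      rw [hn, eq_comm, Int.floor_eq_iff, hl] at this
      exact_mod_cast this
    · rintro ⟨ha, hb⟩
      have h0 : 0 ≤ x := by
        by_contra h
        push Not at h
        have : x * 2 ^ σ.length < 0 := mul_neg_of_neg_of_pos h hp
        have h2 : (0 : ℝ) ≤ strVal σ := by positivity
        linarith
      have h1 : x < 1 := by
        by_contra h
        push Not at h
        nlinarith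
      refine ⟨⟨σ.length, ?_⟩, h0, h1⟩
      refine strVal_inj (initSeg_length _ _) ?_
      have := strVal_digits h0 h1 σ.length
      have h2 : ⌊x * 2 ^ σ.length⌋ = (strVal σ : ℤ) := by
        rw [Int.floor_eq_iff]; push_cast; exact ⟨ha, hb⟩
      rw [h2] at this
      exact_mod_cast this
  rw [this, Real.volume_Ico]
  congr 1
  rw [← sub_div]
  simp

/-- string with code `m` -/
def strOf (m : ℕ) : List Bool := (Encodable.decode m : Option (List Bool)).getD []

/-- length of the string with code `m`, truncated at `m` for junk codes -/
def ln (m : ℕ) : ℕ := min (strOf m).length m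

/-- weight of code -/
noncomputable def wt (m : ℕ) : ℝ := (2 : ℝ)⁻¹ ^ ln m

theorem strOf_encode (σ : List Bool) : strOf (Encodable.encode σ) = σ := by simp [strOf]

theorem ln_encode (σ : List Bool) : ln (Encodable.encode σ) = σ.length := by
  rw [ln, strOf_encode, min_eq_left]
  exact Encodable.length_le_encode σ

theorem hasSum_cyl {S : Set (List Bool)} (hS : IsPrefixFree S) :
    HasSum (fun m => if m ∈ strCodes S then wt m else 0) (muR (cyl S)) := by
  set g : ℕ → Set Cantor := fun m => if m ∈ strCodes S then cyl {strOf m} else ∅ with hg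
  have hU : cyl S = ⋃ m, g m := by
    ext X
    simp only [hg, Set.mem_iUnion]
    constructor
    · rintro ⟨n, hn⟩
      refine ⟨Encodable.encode (initSeg X n), ?_⟩
      rw [if_pos ⟨_, hn, rfl⟩, strOf_encode]
      exact ⟨n, rfl⟩
    · rintro ⟨m, hm⟩
      split_ifs at hm with h
      · obtain ⟨σ, hσ, rfl⟩ := h
        rw [strOf_encode] at hm
        obtain ⟨n, hn⟩ := hm
        exact ⟨n, by rw [Set.mem_singleton_iff.1 hn]; exact hσ⟩
      · exact hm.elim
  have hd : Pairwise (Function.onFun Disjoint g) := by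
    intro m m' hne
    rw [Function.onFun, Set.disjoint_left]
    intro X h1 h2
    simp only [hg] at h1 h2
    split_ifs at h1 h2 with h h'
    · obtain ⟨σ, hσ, rfl⟩ := h
      obtain ⟨τ, hτ, rfl⟩ := h'
      rw [strOf_encode] at h1 h2
      obtain ⟨n, hn⟩ := h1
      obtain ⟨k, hk⟩ := h2
      rw [Set.mem_singleton_iff] at hn hk
      rcases le_total n k with hnk | hnk
      · have := initSeg_prefix X hnk
        rw [hn, hk] at this
        exact hne (by rw [hS _ hσ _ hτ this])
      · have := initSeg_prefix X hnk
        rw [hn, hk] at this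
        exact hne (by rw [hS _ hτ _ hσ this])
    all_goals first | exact h1.elim | exact h2.elim
  have hm : ∀ m, MeasurableSet (g m) := fun m => by
    simp only [hg]; split_ifs
    · exact measurable_cyl _
    · exact MeasurableSet.empty
  have hmu : mu (cyl S) = ∑' m, ENNReal.ofReal (if m ∈ strCodes S then wt m else 0) := by
    rw [hU, measure_iUnion hd hm]
    congr 1
    funext m
    simp only [hg]
    split_ifs with h
    · obtain ⟨σ, -, rfl⟩ := h
      rw [mu_cyl_single, wt, ln_encode, strOf_encode]
    · simp
  have hfin : mu (cyl S) ≠ ⊤ := by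
    have : IsFiniteMeasure mu := by unfold mu; infer_instance
    exact measure_ne_top _ _
  have hnn : ∀ m, 0 ≤ (if m ∈ strCodes S then wt m else 0) := fun m => by
    split_ifs
    · unfold wt; positivity
    · exact le_rfl
  rw [muR, hmu]
  rw [hmu] at hfin
  have := ENNReal.hasSum_toReal hfin
  simpa only [ENNReal.toReal_ofReal (hnn _), ENNReal.tsum_toReal_eq (fun m => ENNReal.ofReal_ne_top)] using this

end RandProb

namespace RandProb

theorem vol_bound {w : ℕ → ℝ} (hw : ∀ m, 0 ≤ w m) (T : ℕ → Finset ℕ) (hT : Monotone T)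
    (n : ℕ) (ε δ : ℝ) (hδ : 0 ≤ δ) (h : ∀ t, ∑ m ∈ (T t).filter (fun m => n ≤ m), w m ≤ ε) :
    volume (⋃ t, Set.Ioo ((∑ m ∈ T t, w m) - δ) ((∑ m ∈ T t, w m) + δ)) ≤
      ENNReal.ofReal (ε + (n + 1) * (2 * δ)) := by
  set L : ℕ → Finset ℕ := fun t => (T t).filter (fun m => m < n) with hL
  set r : ℕ → ℝ := fun t => ∑ m ∈ (T t).filter (fun m => n ≤ m), w m with hr
  set j : ℕ → ℕ := fun t => (L t).card with hj
  have hLm : Monotone L := fun a b hab => Finset.filter_subset_filter _ (hT hab)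
  have hjm : Monotone j := fun a b hab => Finset.card_le_card (hLm hab)
  have hjn : ∀ t, j t ≤ n := fun t => by
    have : L t ⊆ Finset.range n := fun m hm => by
      simp only [hL, Finset.mem_filter] at hm; simpa using hm.2
    simpa using Finset.card_le_card this
  have hrm : Monotone r := fun a b hab =>
    Finset.sum_le_sum_of_subset_of_nonneg (Finset.filter_subset_filter _ (hT hab))
      (fun m _ _ => hw m)
  have hr0 : ∀ t, 0 ≤ r t := fun t => Finset.sum_nonneg fun m _ => hw m
  have hε : 0 ≤ ε := (hr0 0).trans (h 0)
  have hA : ∀ t, ∑ m ∈ T t, w m = (∑ m ∈ L t, w m) + r t := fun t => by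
    rw [← Finset.sum_filter_add_sum_filter_not (T t) (fun m => m < n)]
    simp only [hL, hr, not_lt]
  have hc : ∀ i, ∃ c : ℝ, ∀ t, j t = i → ∑ m ∈ L t, w m = c := by
    intro i
    by_cases hi : ∃ t, j t = i
    · obtain ⟨t0, ht0⟩ := hi
      refine ⟨∑ m ∈ L t0, w m, fun t ht => ?_⟩
      have : L t = L t0 := by
        rcases le_total t t0 with h1 | h1
        · exact Finset.eq_of_subset_of_card_le (hLm h1) (by change j t0 ≤ j t; omega)
        · exact (Finset.eq_of_subset_of_card_le (hLm h1) (by change j t ≤ j t0; omega)).symm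
      rw [this]
    · exact ⟨0, fun t ht => absurd ⟨t, ht⟩ hi⟩
  choose c hc using hc
  set V : ℕ → Set ℝ := fun i => insert 0 {x | ∃ t, j t < i ∧ r t = x} with hV
  set s : ℕ → ℝ := fun i => sSup (V i) with hs
  have hVb : ∀ i, ∀ x ∈ V i, x ≤ ε := by
    rintro i x (rfl | ⟨t, -, rfl⟩)
    · exact hε
    · exact h t
  have hbd : ∀ i, BddAbove (V i) := fun i => ⟨ε, hVb i⟩
  have hne : ∀ i, (V i).Nonempty := fun i => ⟨0, Or.inl rfl⟩
  have hs0 : s 0 = 0 := by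
    have : V 0 = {0} := by
      ext x; simp [hV]
    simp only [hs, this, csSup_singleton]
  have hsn : s (n + 1) ≤ ε := csSup_le (hne _) (hVb _)
  have hsm : ∀ i, s i ≤ s (i + 1) := fun i => csSup_le_csSup (hbd _) (hne _) (by
    rintro x (rfl | ⟨t, ht, rfl⟩)
    · exact Or.inl rfl
    · exact Or.inr ⟨t, by omega, rfl⟩)
  have hlow : ∀ t, s (j t) ≤ r t := fun t => csSup_le (hne _) (by
    rintro x (rfl | ⟨t', ht, rfl⟩)
    · exact hr0 t
    · apply hrm
      by_contra hcon
      have := hjm (le_of_not_ge hcon)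
      omega)
  have hup : ∀ t, r t ≤ s (j t + 1) := fun t => le_csSup (hbd _) (Or.inr ⟨t, by omega, rfl⟩)
  have hsub : (⋃ t, Set.Ioo ((∑ m ∈ T t, w m) - δ) ((∑ m ∈ T t, w m) + δ)) ⊆
      ⋃ i ∈ Finset.range (n + 1), Set.Ioo (c i + s i - δ) (c i + s (i + 1) + δ) := by
    intro x hx
    obtain ⟨t, ht1, ht2⟩ := Set.mem_iUnion.1 hx
    refine Set.mem_biUnion (x := j t) (by simpa using Nat.lt_succ_of_le (hjn t)) ?_
    rw [hA, hc _ t rfl] at ht1 ht2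
    have := hlow t
    have := hup t
    constructor <;> linarith
  refine (measure_mono hsub).trans ((measure_biUnion_finset_le _ _).trans ?_)
  simp only [Real.volume_Ioo]
  rw [← ENNReal.ofReal_sum_of_nonneg (fun i _ => by have := hsm i; linarith)]
  apply ENNReal.ofReal_le_ofReal
  have : ∀ i, c i + s (i + 1) + δ - (c i + s i - δ) = (s (i + 1) - s i) + 2 * δ := fun i => by ring
  simp only [this, Finset.sum_add_distrib, Finset.sum_range_sub, Finset.sum_const,
    Finset.card_range, nsmul_eq_mul, hs0]
  push_cast
  linarith

end RandProb

namespace RandProb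

/-! ### Arithmetic coding -/

theorem primrec_strOf : Primrec strOf :=
  Primrec.option_getD.comp Primrec.decode (Primrec.const [])

theorem primrec_ln : Primrec ln :=
  Primrec.nat_min.comp (Primrec.list_length.comp primrec_strOf) Primrec.id

theorem primrec_pow : Primrec₂ (fun a b : ℕ => a ^ b) := Primrec₂.unpaired'.1 Nat.Primrec.pow

/-- Partial sums of weights, scaled by `2 ^ t`. -/
def Nw (s : ℕ) (G : List Bool) (t : ℕ) : ℕ :=
  Nat.rec (motive := fun _ => ℕ) 0
    (fun m r => r + cond (G.getD m false) (2 ^ (s - ln m)) 0) t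

theorem primrec_Nw : Primrec (fun x : ℕ × List Bool => Nw x.1 x.2 x.1) := by
  refine Primrec.nat_rec' (h := fun (x : ℕ × List Bool) (y : ℕ × ℕ) =>
    y.2 + cond (x.2.getD y.1 false) (2 ^ (x.1 - ln y.1)) 0) Primrec.fst (Primrec.const 0) ?_
  refine Primrec.nat_add.comp (Primrec.snd.comp .snd) (Primrec.cond ?_ ?_ (Primrec.const 0))
  · exact (Primrec.list_getD false).comp (Primrec.snd.comp .fst) (Primrec.fst.comp .snd)
  · exact primrec_pow.comp (Primrec.const 2) (Primrec.nat_sub.comp (Primrec.fst.comp .fst)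
      (primrec_ln.comp (Primrec.fst.comp .snd)))

theorem Nw_eq (s : ℕ) (G : List Bool) (t : ℕ) (h : t ≤ s) :
    (Nw s G t : ℝ) = 2 ^ s * ∑ m ∈ (Finset.range t).filter (fun m => G.getD m false = true), wt m := by
  induction t with
  | zero => simp [Nw]
  | succ t ih =>
    have h1 : Nw s G (t + 1) = Nw s G t + cond (G.getD t false) (2 ^ (s - ln t)) 0 := rfl
    rw [h1, Finset.range_add_one, Finset.filter_insert]
    push_cast
    rw [ih (by omega)]
    by_cases hg : G.getD t false = true
    · rw [if_pos hg, Finset.sum_insert (by simp), hg]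
      have h2 : ln t ≤ s := (min_le_right _ _).trans (by omega)
      simp only [cond_true, wt]
      push_cast
      rw [pow_sub₀ _ (by norm_num) h2, inv_pow]
      ring
    · rw [if_neg hg]
      simp only [Bool.not_eq_true] at hg
      rw [hg]; simp

def Pz (e : ℕ) : ℕ := (1 - e % 2) * (e / 2)
def Mz (e : ℕ) : ℕ := (e % 2) * (e / 2 + 1)

theorem primrec_Pz : Primrec Pz :=
  Primrec.nat_mul.comp (Primrec.nat_sub.comp (Primrec.const 1)
    (Primrec.nat_mod.comp Primrec.id (Primrec.const 2)))
    (Primrec.nat_div.comp Primrec.id (Primrec.const 2))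

theorem primrec_Mz : Primrec Mz :=
  Primrec.nat_mul.comp (Primrec.nat_mod.comp Primrec.id (Primrec.const 2))
    (Primrec.succ.comp (Primrec.nat_div.comp Primrec.id (Primrec.const 2)))

theorem PzMz (z : ℤ) : (Pz (Encodable.encode z) : ℤ) - Mz (Encodable.encode z) = z := by
  cases z with
  | ofNat n =>
    have : Encodable.encode (Int.ofNat n) = 2 * n := rfl
    rw [this]; simp [Pz, Mz]
  | negSucc n =>
    have : Encodable.encode (Int.negSucc n) = 2 * n + 1 := rfl
    rw [this]
    have h1 : (2 * n + 1) % 2 = 1 := by omega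
    have h2 : (2 * n + 1) / 2 = n := by omega
    simp only [Pz, Mz, h1, h2]
    simp [Int.negSucc_eq]

theorem encode_rat (q : ℚ) : Encodable.encode q = Nat.pair (Encodable.encode q.num) q.den := rfl

/-- The arithmetical relation between codes of rationals `p, q` and `N / 2 ^ t`. -/
def rel (i n a c : ℕ) (t N : ℕ) : Prop :=
  (Pz a.unpair.1 * 2 ^ t < N * a.unpair.2 + Mz a.unpair.1 * 2 ^ t ∧
  N * c.unpair.2 + Mz c.unpair.1 * 2 ^ t < Pz c.unpair.1 * 2 ^ t) ∧
  ((n + 1) * 2 ^ (i + 2)) * (Pz c.unpair.1 * a.unpair.2 + Mz a.unpair.1 * c.unpair.2) ≤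
    a.unpair.2 * c.unpair.2 +
    ((n + 1) * 2 ^ (i + 2)) * (Mz c.unpair.1 * a.unpair.2 + Pz a.unpair.1 * c.unpair.2)

theorem rel_iff (i n t N : ℕ) (p q : ℚ) :
    rel i n (Encodable.encode p) (Encodable.encode q) t N ↔
      (p : ℝ) < (N : ℝ) / 2 ^ t ∧ (N : ℝ) / 2 ^ t < q ∧
      ((q : ℝ) - p) * ((n + 1) * 2 ^ (i + 2)) ≤ 1 := by
  have hp := PzMz p.num
  have hq := PzMz q.num
  rw [rel, encode_rat, encode_rat]
  simp only [Nat.unpair_pair]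
  generalize Pz (Encodable.encode p.num) = P1 at *
  generalize Mz (Encodable.encode p.num) = M1 at *
  generalize Pz (Encodable.encode q.num) = P2 at *
  generalize Mz (Encodable.encode q.num) = M2 at *
  have hp' : (p : ℝ) = ((P1 : ℝ) - M1) / p.den := by
    rw [Rat.cast_def, ← hp]; push_cast; rfl
  have hq' : (q : ℝ) = ((P2 : ℝ) - M2) / q.den := by
    rw [Rat.cast_def, ← hq]; push_cast; rfl
  have d1 : (0 : ℝ) < p.den := by exact_mod_cast p.den_pos
  have d2 : (0 : ℝ) < q.den := by exact_mod_cast q.den_pos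
  have d3 : (0 : ℝ) < 2 ^ t := by positivity
  rw [hp', hq', and_assoc]
  refine and_congr ?_ (and_congr ?_ ?_)
  · rw [div_lt_div_iff₀ d1 d3, ← Nat.cast_lt (α := ℝ)]
    push_cast
    constructor <;> intro h <;> nlinarith
  · rw [div_lt_div_iff₀ d3 d2, ← Nat.cast_lt (α := ℝ)]
    push_cast
    constructor <;> intro h <;> nlinarith
  · rw [div_sub_div _ _ d2.ne' d1.ne', div_mul_eq_mul_div, div_le_one (by positivity),
      ← Nat.cast_le (α := ℝ)]
    push_cast
    constructor <;> intro h <;> nlinarith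

theorem primrec_rel : PrimrecPred (fun x : (ℕ × ℕ × ℕ × ℕ) × ℕ × ℕ =>
    rel x.1.1 x.1.2.1 x.1.2.2.1 x.1.2.2.2 x.2.1 x.2.2) := by
  have i : Primrec (fun x : (ℕ × ℕ × ℕ × ℕ) × ℕ × ℕ => x.1.1) := Primrec.fst.comp .fst
  have n : Primrec (fun x : (ℕ × ℕ × ℕ × ℕ) × ℕ × ℕ => x.1.2.1) :=
    Primrec.fst.comp (Primrec.snd.comp .fst)
  have a : Primrec (fun x : (ℕ × ℕ × ℕ × ℕ) × ℕ × ℕ => x.1.2.2.1.unpair) :=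
    Primrec.unpair.comp (Primrec.fst.comp (Primrec.snd.comp (Primrec.snd.comp .fst)))
  have c : Primrec (fun x : (ℕ × ℕ × ℕ × ℕ) × ℕ × ℕ => x.1.2.2.2.unpair) :=
    Primrec.unpair.comp (Primrec.snd.comp (Primrec.snd.comp (Primrec.snd.comp .fst)))
  have t : Primrec (fun x : (ℕ × ℕ × ℕ × ℕ) × ℕ × ℕ => 2 ^ x.2.1) :=
    primrec_pow.comp (Primrec.const 2) (Primrec.fst.comp .snd)
  have N : Primrec (fun x : (ℕ × ℕ × ℕ × ℕ) × ℕ × ℕ => x.2.2) := Primrec.snd.comp .snd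
  have K : Primrec (fun x : (ℕ × ℕ × ℕ × ℕ) × ℕ × ℕ => (x.1.2.1 + 1) * 2 ^ (x.1.1 + 2)) :=
    Primrec.nat_mul.comp (Primrec.succ.comp n) (primrec_pow.comp (Primrec.const 2)
      (Primrec.nat_add.comp i (Primrec.const 2)))
  have a1 := Primrec.fst.comp a
  have a2 := Primrec.snd.comp a
  have c1 := Primrec.fst.comp c
  have c2 := Primrec.snd.comp c
  have Pa := primrec_Pz.comp a1
  have Ma := primrec_Mz.comp a1
  have Pc := primrec_Pz.comp c1
  have Mc := primrec_Mz.comp c1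
  refine PrimrecPred.and (PrimrecPred.and ?_ ?_) ?_
  · exact Primrec.nat_lt.comp (Primrec.nat_mul.comp Pa t)
      (Primrec.nat_add.comp (Primrec.nat_mul.comp N a2) (Primrec.nat_mul.comp Ma t))
  · exact Primrec.nat_lt.comp
      (Primrec.nat_add.comp (Primrec.nat_mul.comp N c2) (Primrec.nat_mul.comp Mc t))
      (Primrec.nat_mul.comp Pc t)
  · exact Primrec.nat_le.comp
      (Primrec.nat_mul.comp K (Primrec.nat_add.comp (Primrec.nat_mul.comp Pc a2)
        (Primrec.nat_mul.comp Ma c2)))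
      (Primrec.nat_add.comp (Primrec.nat_mul.comp a2 c2)
        (Primrec.nat_mul.comp K (Primrec.nat_add.comp (Primrec.nat_mul.comp Mc a2)
        (Primrec.nat_mul.comp Pa c2))))

end RandProb

namespace RandProb

/-- The finite set of numbers below `t` marked by `G`. -/
noncomputable def FG (t : ℕ) (G : List Bool) : Finset ℕ :=
  (Finset.range t).filter (fun m => G.getD m false = true)

theorem Nw_FG (t : ℕ) (G : List Bool) : (Nw t G t : ℝ) / 2 ^ t = ∑ m ∈ FG t G, wt m := by
  rw [Nw_eq t G t le_rfl, mul_div_cancel_left₀ _ (by positivity)]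
  rfl

noncomputable def mkG (t : ℕ) (F : Finset ℕ) : List Bool := (List.range t).map (fun m => decide (m ∈ F))

theorem mkG_getD {t m : ℕ} (F : Finset ℕ) (h : m < t) : (mkG t F).getD m false = decide (m ∈ F) := by
  simp [mkG, List.getD, h]

theorem FG_mkG {t : ℕ} {F : Finset ℕ} (h : ∀ m ∈ F, m < t) : FG t (mkG t F) = F := by
  ext m
  simp only [FG, Finset.mem_filter, Finset.mem_range]
  constructor
  · rintro ⟨h1, h2⟩
    rw [mkG_getD F h1] at h2
    simpa using h2
  · intro hm
    refine ⟨h m hm, ?_⟩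
    rw [mkG_getD F (h m hm)]
    simpa using hm

/-- `C i n`: finite subsets of `DD` beyond `n` have weight at most `2^{-(i+2)}`. -/
def Cc (DD : ℕ → Prop) (i n : ℕ) : Prop :=
  ¬ ∃ x : ℕ × List Bool, (∀ m < x.1, x.2.getD m false = false ∨ (DD m ∧ n ≤ m)) ∧
    2 ^ x.1 < Nw x.1 x.2 x.1 * 2 ^ (i + 2)

theorem Cc_iff (DD : ℕ → Prop) (i n : ℕ) : Cc DD i n ↔
    ∀ F : Finset ℕ, (∀ m ∈ F, DD m ∧ n ≤ m) → ∑ m ∈ F, wt m ≤ (2⁻¹ : ℝ) ^ (i + 2) := by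
  have key : ∀ x : ℕ × List Bool, 2 ^ x.1 < Nw x.1 x.2 x.1 * 2 ^ (i + 2) ↔
      (2⁻¹ : ℝ) ^ (i + 2) < ∑ m ∈ FG x.1 x.2, wt m := by
    intro x
    rw [← Nw_FG, inv_pow, inv_eq_one_div, div_lt_div_iff₀ (by positivity) (by positivity), one_mul,
      ← Nat.cast_lt (α := ℝ)]
    push_cast
    rfl
  unfold Cc
  push Not
  constructor
  · intro h F hF
    set t := F.sup id + 1 with ht
    have hlt : ∀ m ∈ F, m < t := fun m hm => Nat.lt_succ_of_le (Finset.le_sup (f := id) hm)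
    have h1 := h (t, mkG t F) ?_
    · rw [← not_lt, key] at h1
      simp only [FG_mkG hlt] at h1
      exact not_lt.1 h1
    · intro m hm
      simp only at hm ⊢
      rw [mkG_getD F hm]
      by_cases hmF : m ∈ F
      · exact Or.inr (hF m hmF)
      · left; simpa using hmF
  · intro h x hx
    rw [← not_lt, key, not_lt]
    refine h _ fun m hm => ?_
    simp only [FG, Finset.mem_filter, Finset.mem_range] at hm
    rcases hx m hm.1 with h1 | h1
    · rw [hm.2] at h1; cases h1
    · exact h1

theorem Sg_Cc {DD : ℕ → Prop} (hD : Sg 2 DD) : Sg 3 (fun x : ℕ × ℕ => Cc DD x.1 x.2) := by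
  refine Sg.neg (n := 2) (Sg.exT (n := 1) (p := fun y : (ℕ × ℕ) × (ℕ × List Bool) =>
    (∀ m < y.2.1, y.2.2.getD m false = false ∨ (DD m ∧ y.1.2 ≤ m)) ∧
    2 ^ y.2.1 < Nw y.2.1 y.2.2 y.2.1 * 2 ^ (y.1.1 + 2)) (Sg.and ?_ ?_))
  · refine Sg.all_lt (p := fun z : ((ℕ × ℕ) × (ℕ × List Bool)) × ℕ =>
      z.1.2.2.getD z.2 false = false ∨ (DD z.2 ∧ z.1.1.2 ≤ z.2)) (Sg.or ?_ (Sg.and ?_ ?_))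
      (t := fun y => y.2.1) (Primrec.fst.comp .snd).to_comp
    · refine Sg.of_prim (Primrec.eq.comp ?_ (Primrec.const false))
      exact (Primrec.list_getD false).comp (Primrec.snd.comp (Primrec.snd.comp .fst)) .snd
    · exact hD.comp Computable.snd
    · exact Sg.of_prim (Primrec.nat_le.comp (Primrec.snd.comp (Primrec.fst.comp .fst)) .snd)
  · refine Sg.of_prim (Primrec.nat_lt.comp ?_ (Primrec.nat_mul.comp ?_ ?_))
    · exact primrec_pow.comp (Primrec.const 2) (Primrec.fst.comp .snd)
    · exact primrec_Nw.comp Primrec.snd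
    · exact primrec_pow.comp (Primrec.const 2)
        (Primrec.nat_add.comp (Primrec.fst.comp .fst) (Primrec.const 2))

/-- `G` marks exactly the numbers below `t` enumerated by stage `t`. -/
def isT (q : ℕ × ℕ → Prop) (t : ℕ) (G : List Bool) : Prop :=
  ∀ m < t, (G.getD m false = true ∧ ∃ k < t, ¬ q (m, k)) ∨ (G.getD m false = false ∧ ∀ k < t, q (m, k))

theorem Sg_isT {q : ℕ × ℕ → Prop} (hq : Sg 2 q) : Sg 3 (fun x : ℕ × List Bool => isT q x.1 x.2) := by
  have hg : Primrec (fun z : (ℕ × List Bool) × ℕ => z.1.2.getD z.2 false) :=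
    (Primrec.list_getD false).comp (Primrec.snd.comp .fst) .snd
  refine Sg.all_lt (p := fun z : (ℕ × List Bool) × ℕ =>
      (z.1.2.getD z.2 false = true ∧ ∃ k < z.1.1, ¬ q (z.2, k)) ∨
      (z.1.2.getD z.2 false = false ∧ ∀ k < z.1.1, q (z.2, k)))
      (Sg.or (Sg.and ?_ ?_) (Sg.and ?_ ?_))
      (t := fun y => y.1) Computable.fst
  · exact Sg.of_prim (Primrec.eq.comp hg (Primrec.const true))
  · refine Sg.ex_lt (p := fun w : ((ℕ × List Bool) × ℕ) × ℕ => ¬ q (w.1.2, w.2)) ?_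
      (t := fun z => z.1.1) (Primrec.fst.comp .fst).to_comp
    exact Sg.neg (n := 2) (hq.comp ((Computable.snd.comp .fst).pair .snd))
  · exact Sg.of_prim (Primrec.eq.comp hg (Primrec.const false))
  · refine Sg.all_lt (p := fun w : ((ℕ × List Bool) × ℕ) × ℕ => q (w.1.2, w.2)) ?_
      (t := fun z => z.1.1) (Primrec.fst.comp .fst).to_comp
    exact Sg.up (hq.comp ((Computable.snd.comp .fst).pair .snd))

/-- The stage-`t` approximation. -/
noncomputable def Tt (q : ℕ × ℕ → Prop) (t : ℕ) : Finset ℕ :=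
  (Finset.range t).filter (fun m => ∃ k < t, ¬ q (m, k))

theorem Tt_mono (q : ℕ × ℕ → Prop) : Monotone (Tt q) := by
  intro s t h m
  simp only [Tt, Finset.mem_filter, Finset.mem_range]
  rintro ⟨h1, k, h2, h3⟩
  exact ⟨by omega, k, by omega, h3⟩

theorem isT_FG {q : ℕ × ℕ → Prop} {t : ℕ} {G : List Bool} (h : isT q t G) : FG t G = Tt q t := by
  ext m
  simp only [FG, Tt, Finset.mem_filter, Finset.mem_range]
  refine and_congr_right fun hm => ?_
  rcases h m hm with ⟨h1, h2⟩ | ⟨h1, h2⟩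
  · simp only [h1, true_iff]; exact h2
  · simp only [h1, Bool.false_eq_true, false_iff]
    push Not
    exact h2

theorem isT_mkG (q : ℕ × ℕ → Prop) (t : ℕ) : isT q t (mkG t (Tt q t)) := by
  intro m hm
  rw [mkG_getD _ hm]
  by_cases h : ∃ k < t, ¬ q (m, k)
  · left
    refine ⟨?_, h⟩
    simp only [decide_eq_true_eq, Tt, Finset.mem_filter, Finset.mem_range]
    exact ⟨hm, h⟩
  · right
    refine ⟨?_, by push Not at h; exact h⟩
    simp only [decide_eq_false_iff_not, Tt, Finset.mem_filter, Finset.mem_range]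
    exact fun h2 => h h2.2

/-- The test. -/
def Wpred (DD : ℕ → Prop) (q : ℕ × ℕ → Prop) (m : ℕ) : Prop :=
  ∃ x : ℕ × ℕ × List Bool, (Cc DD m.unpair.1 x.1 ∧ isT q x.2.1 x.2.2) ∧
    rel m.unpair.1 x.1 m.unpair.2.unpair.1 m.unpair.2.unpair.2 x.2.1 (Nw x.2.1 x.2.2 x.2.1)

theorem Sg_Wpred {DD : ℕ → Prop} (hD : Sg 2 DD) {q : ℕ × ℕ → Prop} (hq : Sg 2 q) :
    Sg 3 (Wpred DD q) := by
  have hi : Primrec (fun y : ℕ × (ℕ × ℕ × List Bool) => y.1.unpair.1) :=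
    Primrec.fst.comp (Primrec.unpair.comp .fst)
  have hc : Primrec (fun y : ℕ × (ℕ × ℕ × List Bool) => y.1.unpair.2.unpair) :=
    Primrec.unpair.comp (Primrec.snd.comp (Primrec.unpair.comp .fst))
  have hn : Primrec (fun y : ℕ × (ℕ × ℕ × List Bool) => y.2.1) := Primrec.fst.comp .snd
  have ht : Primrec (fun y : ℕ × (ℕ × ℕ × List Bool) => y.2.2) := Primrec.snd.comp .snd
  refine Sg.exT (n := 2) (p := fun y : ℕ × (ℕ × ℕ × List Bool) =>
    (Cc DD y.1.unpair.1 y.2.1 ∧ isT q y.2.2.1 y.2.2.2) ∧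
    rel y.1.unpair.1 y.2.1 y.1.unpair.2.unpair.1 y.1.unpair.2.unpair.2 y.2.2.1
      (Nw y.2.2.1 y.2.2.2 y.2.2.1)) (Sg.and (Sg.and ?_ ?_) ?_)
  · exact (Sg_Cc hD).comp (hi.pair hn).to_comp
  · exact (Sg_isT hq).comp ht.to_comp
  · refine (Sg.of_prim primrec_rel).comp (f := fun y : ℕ × (ℕ × ℕ × List Bool) =>
      ((y.1.unpair.1, y.2.1, y.1.unpair.2.unpair.1, y.1.unpair.2.unpair.2),
        y.2.2.1, Nw y.2.2.1 y.2.2.2 y.2.2.1)) (Primrec.to_comp ?_)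
    exact (hi.pair (hn.pair ((Primrec.fst.comp hc).pair (Primrec.snd.comp hc)))).pair
      ((Primrec.fst.comp ht).pair (primrec_Nw.comp ht))

theorem mem_testSet {DD : ℕ → Prop} {q : ℕ × ℕ → Prop} {i : ℕ} {x : ℝ} :
    x ∈ testSet {m | Wpred DD q m} i ↔ ∃ (a c : ℚ) (n t : ℕ), Cc DD i n ∧
      (a : ℝ) < ∑ m ∈ Tt q t, wt m ∧ (∑ m ∈ Tt q t, wt m) < (c : ℝ) ∧
      ((c : ℝ) - a) * ((n + 1) * 2 ^ (i + 2)) ≤ 1 ∧ (a : ℝ) < x ∧ x < c := by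
  have henc : ∀ a c : ℚ, Encodable.encode (a, c) = Nat.pair (Encodable.encode a) (Encodable.encode c) :=
    fun _ _ => rfl
  have hmem : ∀ a c : ℚ, Nat.pair i (Encodable.encode (a, c)) ∈ {m | Wpred DD q m} ↔
      ∃ y : ℕ × ℕ × List Bool, (Cc DD i y.1 ∧ isT q y.2.1 y.2.2) ∧
        rel i y.1 (Encodable.encode a) (Encodable.encode c) y.2.1 (Nw y.2.1 y.2.2 y.2.1) := by
    intro a c
    rw [Set.mem_ofPred_eq, Wpred, henc]
    simp only [Nat.unpair_pair]
  constructor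
  · rintro ⟨a, c, hW, h1, h2⟩
    obtain ⟨⟨n, t, G⟩, ⟨hC, hT⟩, hr⟩ := (hmem a c).1 hW
    rw [rel_iff, Nw_FG, isT_FG hT] at hr
    exact ⟨a, c, n, t, hC, hr.1, hr.2.1, hr.2.2, h1, h2⟩
  · rintro ⟨a, c, n, t, hC, h1, h2, h3, h4, h5⟩
    refine ⟨a, c, (hmem a c).2 ⟨⟨n, t, mkG t (Tt q t)⟩, ⟨hC, isT_mkG q t⟩, ?_⟩, h4, h5⟩
    rw [rel_iff, Nw_FG, isT_FG (isT_mkG q t)]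
    exact ⟨h1, h2, h3⟩

theorem wt_pos (m : ℕ) : 0 < wt m := by unfold wt; positivity

theorem volume_test {DD : ℕ → Prop} {q : ℕ × ℕ → Prop} (hsub : ∀ m k, ¬ q (m, k) → DD m) (i : ℕ) :
    volume (testSet {m | Wpred DD q m} i) ≤ ENNReal.ofReal ((2 : ℝ)⁻¹ ^ i) := by
  by_cases hex : ∃ n, Cc DD i n
  · set n0 := Nat.find hex with hn0
    have hC0 : Cc DD i n0 := Nat.find_spec hex
    set δ : ℝ := 1 / ((n0 + 1) * 2 ^ (i + 2)) with hδ
    have hδ0 : 0 < δ := by positivity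
    have hb := vol_bound (fun m => (wt_pos m).le) (Tt q) (Tt_mono q) n0 ((2⁻¹ : ℝ) ^ (i + 2)) δ hδ0.le ?_
    · refine (measure_mono ?_).trans (hb.trans (ENNReal.ofReal_le_ofReal ?_))
      · intro x hx
        obtain ⟨a, c, n, t, hC, h1, h2, h3, h4, h5⟩ := mem_testSet.1 hx
        have hle : n0 ≤ n := Nat.find_min' hex hC
        have hle' : (n0 : ℝ) ≤ n := by exact_mod_cast hle
        have hca : (c : ℝ) - a ≤ δ := by
          rw [hδ, le_div_iff₀ (by positivity)]
          refine le_trans ?_ h3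
          have : (0 : ℝ) ≤ c - a := by linarith
          gcongr
        refine Set.mem_iUnion.2 ⟨t, ?_, ?_⟩ <;> linarith
      · have : ((n0 : ℝ) + 1) * (2 * δ) = 2 * (2⁻¹ : ℝ) ^ (i + 2) := by
          rw [hδ]
          field_simp
          rw [← mul_pow]; norm_num
        rw [this, pow_add]
        have : (0 : ℝ) < 2⁻¹ ^ i := by positivity
        nlinarith
    · intro t
      refine (Cc_iff DD i n0).1 hC0 _ fun m hm => ?_
      simp only [Tt, Finset.mem_filter, Finset.mem_range] at hm
      obtain ⟨⟨_, k, _, hk⟩, hn⟩ := hm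
      exact ⟨hsub m k hk, hn⟩
  · have : testSet {m | Wpred DD q m} i = ∅ := by
      ext x
      rw [mem_testSet]
      simp only [Set.mem_empty_iff_false, iff_false]
      rintro ⟨a, c, n, t, hC, _⟩
      exact hex ⟨n, hC⟩
    rw [this]; simp

theorem main_lemma {D S : Set (List Bool)} (hDp : IsPrefixFree D)
    (hD : Sg 2 (fun m => m ∈ strCodes D)) (hSD : S ⊆ D) (hS : Sg 3 (fun m => m ∈ strCodes S)) :
    ¬ MLRandomIn (iterJump 2) (muR (cyl S)) := by
  obtain ⟨q, hq, hSq⟩ := hS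
  simp only at hSq
  have hcodes : strCodes S ⊆ strCodes D := by
    rintro m ⟨σ, h, e⟩; exact ⟨σ, hSD h, e⟩
  have hSp : IsPrefixFree S := fun σ h τ h' => hDp σ (hSD h) τ (hSD h')
  set DD : ℕ → Prop := fun m => m ∈ strCodes D with hDD
  have hsub : ∀ m k, ¬ q (m, k) → DD m := fun m k h => hcodes ((hSq m).2 ⟨k, h⟩)
  intro hR
  obtain ⟨i, hi⟩ := hR {m | Wpred DD q m} (Sg_Wpred hD hq).ceIn (volume_test hsub)
  apply hi
  clear hi
  set α := muR (cyl S) with hα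
  have hsum : HasSum (fun m => if m ∈ strCodes S then wt m else 0) α := hasSum_cyl hSp
  have hTsum : ∀ t, ∑ m ∈ Tt q t, wt m = ∑ m ∈ Tt q t, (if m ∈ strCodes S then wt m else 0) := by
    intro t
    refine Finset.sum_congr rfl fun m hm => ?_
    simp only [Tt, Finset.mem_filter, Finset.mem_range] at hm
    obtain ⟨_, k, _, hk⟩ := hm
    rw [if_pos ((hSq m).2 ⟨k, hk⟩)]
  have hnn : ∀ m, 0 ≤ (if m ∈ strCodes S then wt m else 0) := by
    intro m; split_ifs
    · exact (wt_pos m).le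
    · exact le_rfl
  have hle : ∀ t, ∑ m ∈ Tt q t, wt m ≤ α := by
    intro t
    rw [hTsum]
    exact sum_le_hasSum _ (fun m _ => hnn m) hsum
  -- existence of n
  obtain ⟨n, hn⟩ : ∃ n, Cc DD i n := by
    have hs := (hasSum_cyl hDp).summable
    obtain ⟨s, hs⟩ := summable_iff_vanishing_norm.1 hs ((2⁻¹ : ℝ) ^ (i + 2)) (by positivity)
    refine ⟨s.sup id + 1, (Cc_iff _ _ _).2 fun F hF => ?_⟩
    have h1 := hs F ?_
    · rw [Real.norm_eq_abs] at h1
      have h2 := (le_abs_self _).trans h1.le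
      refine le_trans (le_of_eq ?_) h2
      refine Finset.sum_congr rfl fun m hm => ?_
      rw [if_pos (hF m hm).1]
    · rw [Finset.disjoint_left]
      intro m hm hms
      have h1 := (hF m hm).2
      have h2 : m ≤ s.sup id := Finset.le_sup (f := id) hms
      omega
  set δ : ℝ := 1 / ((n + 1) * 2 ^ (i + 2)) with hδ
  have hδ0 : 0 < δ := by positivity
  -- stage t
  obtain ⟨t, ht⟩ : ∃ t, α - δ / 3 < ∑ m ∈ Tt q t, wt m := by
    have h1 := hsum.eventually (lt_mem_nhds (show α - δ / 3 < α by linarith))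
    obtain ⟨F, hF⟩ := h1.exists
    have hk : ∀ m, ∃ k, m ∈ strCodes S → ¬ q (m, k) := by
      intro m
      by_cases h : m ∈ strCodes S
      · obtain ⟨k, hk⟩ := (hSq m).1 h
        exact ⟨k, fun _ => hk⟩
      · exact ⟨0, fun h' => absurd h' h⟩
    choose k hk using hk
    refine ⟨F.sup id + F.sup k + 1, hF.trans_le ?_⟩
    rw [← Finset.sum_filter]
    refine Finset.sum_le_sum_of_subset_of_nonneg ?_ fun m _ _ => (wt_pos m).le
    intro m hm
    simp only [Finset.mem_filter] at hm
    have h2 : m ≤ F.sup id := Finset.le_sup (f := id) hm.1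
    have h3 : k m ≤ F.sup k := Finset.le_sup hm.1
    simp only [Tt, Finset.mem_filter, Finset.mem_range]
    exact ⟨by omega, k m, by omega, hk m hm.2⟩
  have hA := hle t
  obtain ⟨a, ha1, ha2⟩ := exists_rat_btwn (show (∑ m ∈ Tt q t, wt m) - δ / 3 < ∑ m ∈ Tt q t, wt m by linarith)
  obtain ⟨c, hc1, hc2⟩ := exists_rat_btwn (show α < α + δ / 3 by linarith)
  refine mem_testSet.2 ⟨a, c, n, t, hn, ha2, by linarith, ?_, by linarith, hc1⟩
  rw [← le_div_iff₀ (by positivity), ← hδ]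
  linarith

/-! ### Machines -/

theorem mem_strCodes {S : Set (List Bool)} {m : ℕ} :
    m ∈ strCodes S ↔ Encodable.encode (strOf m) = m ∧ strOf m ∈ S := by
  constructor
  · rintro ⟨σ, h, rfl⟩
    rw [strOf_encode]; exact ⟨rfl, h⟩
  · rintro ⟨h1, h2⟩
    exact ⟨_, h2, h1⟩

theorem prefixFree_DOMstar (M : InfMachine) : IsPrefixFree M.DOMstar := by
  intro σ hσ τ hτ h
  by_contra hne
  exact hτ.2 σ h hne hσ.1

theorem Sg_code {n : ℕ} {S : Set (List Bool)} (h : Sg n (fun σ => σ ∈ S)) :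
    Sg n (fun m => m ∈ strCodes S) := by
  refine Sg.congr (Sg.and (p := fun m => Encodable.encode (strOf m) = m) ?_
    (h.comp primrec_strOf.to_comp)) fun m => mem_strCodes
  exact Sg.of_prim (Primrec.eq.comp (Primrec.encode.comp primrec_strOf) Primrec.id)

theorem Sg_eq_some (M : InfMachine) (n : ℕ) :
    Sg n (fun x : (List Bool × ℕ) × List Bool => M.f x.1.1 x.1.2 = some x.2) := by
  refine Sg.comp (p := fun y : Option (List Bool) × Option (List Bool) => y.1 = y.2)
    (Sg.of_prim (Primrec.eq.comp .fst .snd))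
    (f := fun x : (List Bool × ℕ) × List Bool => (M.f x.1.1 x.1.2, some x.2)) ?_
  exact (M.computable.comp (Computable.fst.comp .fst) (Computable.snd.comp .fst)).pair
    (Computable.option_some.comp .snd)

theorem Sg_none (M : InfMachine) (n : ℕ) :
    Sg n (fun x : List Bool × ℕ => M.f x.1 x.2 = none) := by
  refine Sg.comp (p := fun y : Option (List Bool) => y = none)
    (Sg.of_prim (Primrec.eq.comp .id (Primrec.const none)))
    (f := fun x : List Bool × ℕ => M.f x.1 x.2) ?_
  exact M.computable.comp Computable.fst Computable.snd

theorem Sg_notDom (M : InfMachine) : Sg 1 (fun σ : List Bool => ∃ n, M.f σ n = none) :=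
  Sg.ex (n := 0) (Sg_none M 1)

theorem Sg_DOMstar (M : InfMachine) : Sg 2 (fun σ : List Bool => σ ∈ M.DOMstar) := by
  have h1 : Sg 2 (fun σ : List Bool => ¬ ∃ n, M.f σ n = none) := (Sg_notDom M).neg
  have h2 : Sg 2 (fun σ : List Bool => ∀ j < σ.length, ∃ n, M.f (σ.take j) n = none) := by
    refine Sg.all_lt (p := fun x : List Bool × ℕ => ∃ n, M.f (x.1.take x.2) n = none) ?_
      (t := fun σ => σ.length) Primrec.list_length.to_comp
    refine Sg.up ((Sg_notDom M).comp (f := fun x : List Bool × ℕ => x.1.take x.2) ?_)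
    exact (Primrec.list_take.comp .snd .fst).to_comp
  refine (h1.and h2).congr fun σ => ?_
  have hdom : ∀ τ, M.domInf τ ↔ ¬ ∃ n, M.f τ n = none := by
    intro τ; simp [InfMachine.domInf]
  simp only [InfMachine.DOMstar, Set.mem_ofPred_eq, hdom, not_not]
  refine and_congr_right fun _ => ?_
  constructor
  · intro h j hj
    refine h _ (List.take_prefix _ _) fun he => ?_
    have := congrArg List.length he
    simp at this; omega
  · intro h τ hτ hne
    have hlen : τ.length < σ.length := by
      refine lt_of_le_of_ne hτ.length_le fun he => hne (hτ.eq_of_length he)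
    have := h _ hlen
    rwa [← List.prefix_iff_eq_take.1 hτ] at this

theorem Sg_COFstar (M : InfMachine) :
    Sg 3 (fun σ : List Bool => σ ∈ M.COFout ∩ M.DOMstar) := by
  have h1 : Sg 3 (fun σ : List Bool => M.outInf σ) := by
    have h : Sg 1 (fun x : List Bool × ℕ => ∃ n a, M.f x.1 n = some a ∧ x.2 ≤ a.length) := by
      refine Sg.ex (n := 0) (p := fun y : (List Bool × ℕ) × ℕ =>
        ∃ a, M.f y.1.1 y.2 = some a ∧ y.1.2 ≤ a.length) (Sg.exT (n := 0)
        (p := fun z : ((List Bool × ℕ) × ℕ) × List Bool =>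
          M.f z.1.1.1 z.1.2 = some z.2 ∧ z.1.1.2 ≤ z.2.length) (Sg.and ?_ ?_))
      · exact (Sg_eq_some M 1).comp (f := fun z : ((List Bool × ℕ) × ℕ) × List Bool =>
          ((z.1.1.1, z.1.2), z.2)) (((Computable.fst.comp (Computable.fst.comp .fst)).pair
          (Computable.snd.comp .fst)).pair .snd)
      · exact Sg.of_prim (Primrec.nat_le.comp (Primrec.snd.comp (Primrec.fst.comp .fst))
          (Primrec.list_length.comp .snd))
    refine ((Sg.ex (n := 1) h.neg).neg).congr fun σ => ?_
    simp only [InfMachine.outInf]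
    push Not
    rfl
  have h2 : Sg 3 (fun σ : List Bool => ∃ t, ∀ k, t ≤ k → M.hasBit σ k true) := by
    have h : Sg 1 (fun x : List Bool × ℕ => M.hasBit x.1 x.2 true) := by
      refine Sg.ex (n := 0) (p := fun y : (List Bool × ℕ) × ℕ =>
        ∃ a, M.f y.1.1 y.2 = some a ∧ a[y.1.2]? = some true) (Sg.exT (n := 0)
        (p := fun z : ((List Bool × ℕ) × ℕ) × List Bool =>
          M.f z.1.1.1 z.1.2 = some z.2 ∧ z.2[z.1.1.2]? = some true) (Sg.and ?_ ?_))
      · exact (Sg_eq_some M 1).comp (f := fun z : ((List Bool × ℕ) × ℕ) × List Bool =>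
          ((z.1.1.1, z.1.2), z.2)) (((Computable.fst.comp (Computable.fst.comp .fst)).pair
          (Computable.snd.comp .fst)).pair .snd)
      · exact Sg.of_prim (Primrec.eq.comp (Primrec.list_getElem?.comp .snd
          (Primrec.snd.comp (Primrec.fst.comp .fst))) (Primrec.const (some true)))
    have h' : Sg 3 (fun x : List Bool × ℕ => ¬ ∃ k, x.2 ≤ k ∧ ¬ M.hasBit x.1 k true) := by
      refine Sg.neg (n := 2) (Sg.ex (n := 1) (p := fun y : (List Bool × ℕ) × ℕ =>
        y.1.2 ≤ y.2 ∧ ¬ M.hasBit y.1.1 y.2 true) (Sg.and ?_ ?_))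
      · exact Sg.of_prim (Primrec.nat_le.comp (Primrec.snd.comp .fst) .snd)
      · exact Sg.neg (n := 1) (h.comp (f := fun y : (List Bool × ℕ) × ℕ => (y.1.1, y.2))
          ((Computable.fst.comp .fst).pair .snd))
    refine (Sg.ex (n := 2) h').congr fun σ => ?_
    simp only
    push Not
    rfl
  refine ((h1.and h2).and (Sg_DOMstar M).up).congr fun σ => ?_
  simp only [InfMachine.COFout, InfMachine.DOMstar, Set.mem_inter_iff, Set.mem_ofPred_eq]
  tauto

theorem cyl_COF (M : InfMachine) : cyl M.COFout = cyl (M.COFout ∩ M.DOMstar) := by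
  ext X
  constructor
  · rintro ⟨n, hn⟩
    have hex : ∃ j, M.domInf (initSeg X j) := ⟨n, hn.1⟩
    set j := Nat.find hex with hj
    have hjd : M.domInf (initSeg X j) := Nat.find_spec hex
    have hjn : j ≤ n := Nat.find_min' hex hn.1
    obtain ⟨τ, hτ⟩ := initSeg_prefix X hjn
    have hf : ∀ k, M.f (initSeg X n) k = M.f (initSeg X j) k := by
      intro k
      obtain ⟨a, ha⟩ := Option.ne_none_iff_exists'.1 (hjd k)
      rw [← hτ, M.sd _ τ _ _ ha, ha]
    refine ⟨j, ⟨hjd, ?_, ?_⟩, hjd, ?_⟩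
    · have h := hn.2.1
      unfold InfMachine.outInf at h ⊢
      simpa only [hf] using h
    · have h := hn.2.2
      unfold InfMachine.hasBit at h ⊢
      simpa only [hf] using h
    · intro ρ hρ hne hd
      have hlen : ρ.length < j := by
        refine lt_of_le_of_ne (hρ.length_le.trans (initSeg_length X j).le) fun he =>
          hne (hρ.eq_of_length (he.trans (initSeg_length X j).symm))
      refine Nat.find_min hex hlen ?_
      have h1 := initSeg_prefix X hlen.le
      have h2 : ρ = initSeg X ρ.length := by
        refine (List.prefix_of_prefix_length_le hρ h1 ?_).eq_of_length ?_ <;>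
          rw [initSeg_length]
      rwa [← h2]
  · rintro ⟨n, hn⟩
    exact ⟨n, hn.1⟩

/-- **Limits on randomness for infinitary self-delimiting machines.**
The measure of any `Σ^0_3` subset of the domain of the prefix-free machine `M^*`
associated with an infinitary self-delimiting machine is not 3-random.  In particular,
the probability that the output of a universal infinitary self-delimiting machine is a
stream with a tail of 1s is not 3-random. -/
theorem infinitary_measure_not_three_random :
    (∀ (M : InfMachine) (S : Set (List Bool)), S ⊆ M.DOMstar → SigmaStr 3 S →
        ¬ NRandom 3 (muR (cyl S))) ∧
    (∀ U : InfMachine, UniversalInf U → ¬ NRandom 3 (muR (cyl U.COFout))) := by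
  constructor
  · rintro M S hS ⟨c, hc⟩
    refine main_lemma (prefixFree_DOMstar M) (Sg_code (Sg_DOMstar M)) hS ?_
    rw [hc]
    exact Sg.of_idx 2 c
  · intro U _
    rw [cyl_COF]
    exact main_lemma (prefixFree_DOMstar U) (Sg_code (Sg_DOMstar U)) Set.inter_subset_right
      (Sg_code (Sg_COFstar U))

end RandProb
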